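/- arXiv:2605.07119 — 2 statements merged into one kernel-verified Lean document; each statement's English description precedes it below -/
import Mathlib

section
/- Fix d, K ∈ ℕ₊, 0 < s < 1, and let r : B → (ℝ^d)^K (on the closed Euclidean unit ball B of ℝ^d, with components r_1,…,r_K) satisfy: ‖r_k(x)‖₂ ≤ λ_max for all x ∈ B and k; ‖r_k(x) − r_{k̃}(x)‖₂ ≥ s_sep for all x ∈ B and k ≠ k̃; and the Lipschitz bound max_k ‖r_k(x) − r_k(x̃)‖₂ ≤ L_r‖x − x̃‖₂ for all x, x̃ ∈ B. Fix x_0 ∈ B and define centres recursively by x_∅ := x_0 and x_{αk} := x_α + s^{|α|+1}·r_k(x_α) for every word α over {1,…,K} and every k ∈ {1,…,K}, assuming all centres remain in B. Let δ_l denote the minimum Euclidean distance between distinct points of X_l := {x_α : |α| = l}. Then δ_1 ≥ s·s_sep, and for every l ≥ 1: δ_{l+1} ≥ max{0, min{s^{l+1}·s_sep, (1 − s^{l+1}·L_r)·δ_l − 2·s^{l+1}·λ_max}}. -/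
/-- Recursively generated centres of a classification field.  Words over `{1,…,K}` are
encoded as `List (Fin K)`, written with the most recently appended letter first, so that
the root is `[]` and the child of `x_α` in direction `k` is
`x_{αk} = x_α + s^(|α|+1) • r (x_α) k`. -/
noncomputable def centre {d K : ℕ} (s : ℝ)
    (r : EuclideanSpace ℝ (Fin d) → Fin K → EuclideanSpace ℝ (Fin d))
    (x₀ : EuclideanSpace ℝ (Fin d)) : List (Fin K) → EuclideanSpace ℝ (Fin d)
  | [] => x₀
  | k :: α => centre s r x₀ α + s ^ (α.length + 1) • r (centre s r x₀ α) k

/-- Recursive lower bound for level-wise centre separation.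
If `r` is bounded by `λ_max`, has sibling separation `s_sep`, and is `L_r`-Lipschitz on
the closed unit ball, and centres are generated recursively from `x₀`, then
`δ_1 ≥ s·s_sep`, and for every `l ≥ 1`,
`δ_{l+1} ≥ max {0, min {s^{l+1} s_sep, (1 − s^{l+1} L_r) δ_l − 2 s^{l+1} λ_max}}`,
where `δ_l` is (a nonnegative lower bound on) the minimum distance between distinct
level-`l` centres. -/
theorem recursive_lower_bound_levelwise_centre_separation
    (d K : ℕ) (hd : 0 < d) (hK : 0 < K)
    (s lamMax sSep Lr : ℝ)
    (hs0 : 0 < s) (hs1 : s < 1) (hlam : 0 < lamMax) (hsep : 0 < sSep) (hLr : 0 ≤ Lr)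
    (r : EuclideanSpace ℝ (Fin d) → Fin K → EuclideanSpace ℝ (Fin d))
    (hbd : ∀ x ∈ Metric.closedBall (0 : EuclideanSpace ℝ (Fin d)) 1, ∀ k, ‖r x k‖ ≤ lamMax)
    (hsib : ∀ x ∈ Metric.closedBall (0 : EuclideanSpace ℝ (Fin d)) 1,
      ∀ k k' : Fin K, k ≠ k' → sSep ≤ ‖r x k - r x k'‖)
    (hlip : ∀ x ∈ Metric.closedBall (0 : EuclideanSpace ℝ (Fin d)) 1,
      ∀ y ∈ Metric.closedBall (0 : EuclideanSpace ℝ (Fin d)) 1,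
        ∀ k, ‖r x k - r y k‖ ≤ Lr * ‖x - y‖)
    (x₀ : EuclideanSpace ℝ (Fin d)) (hx₀ : x₀ ∈ Metric.closedBall (0 : EuclideanSpace ℝ (Fin d)) 1)
    (hball : ∀ α : List (Fin K),
      centre s r x₀ α ∈ Metric.closedBall (0 : EuclideanSpace ℝ (Fin d)) 1) :
    (∀ α β : List (Fin K), α.length = 1 → β.length = 1 →
        centre s r x₀ α ≠ centre s r x₀ β →
        s * sSep ≤ ‖centre s r x₀ α - centre s r x₀ β‖) ∧
    (∀ l : ℕ, 1 ≤ l → ∀ δl : ℝ, 0 ≤ δl →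
      (∀ α β : List (Fin K), α.length = l → β.length = l →
        centre s r x₀ α ≠ centre s r x₀ β →
        δl ≤ ‖centre s r x₀ α - centre s r x₀ β‖) →
      ∀ α β : List (Fin K), α.length = l + 1 → β.length = l + 1 →
        centre s r x₀ α ≠ centre s r x₀ β →
        max 0 (min (s ^ (l + 1) * sSep)
            ((1 - s ^ (l + 1) * Lr) * δl - 2 * s ^ (l + 1) * lamMax))
          ≤ ‖centre s r x₀ α - centre s r x₀ β‖) := by
  have key : ∀ (l : ℕ) (a b : List (Fin K)) (k j : Fin K), a.length = l → b.length = l →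
      centre s r x₀ a = centre s r x₀ b →
      centre s r x₀ (k :: a) ≠ centre s r x₀ (j :: b) →
      s ^ (l + 1) * sSep ≤ ‖centre s r x₀ (k :: a) - centre s r x₀ (j :: b)‖ := by
    intro l a b k j ha hb hab hne
    have hkj : k ≠ j := by
      rintro rfl
      exact hne (by simp only [centre, hab, ha, hb])
    have e : centre s r x₀ (k :: a) - centre s r x₀ (j :: b)
        = s ^ (l + 1) • (r (centre s r x₀ b) k - r (centre s r x₀ b) j) := by
      simp only [centre, hab, ha, hb, smul_sub]
      abel
    rw [e, norm_smul, Real.norm_of_nonneg (by positivity)]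
    exact mul_le_mul_of_nonneg_left (hsib _ (hball b) k j hkj) (by positivity)
  constructor
  · intro α β hα hβ hne
    obtain ⟨k, rfl⟩ := List.length_eq_one_iff.1 hα
    obtain ⟨j, rfl⟩ := List.length_eq_one_iff.1 hβ
    simpa using key 0 [] [] k j rfl rfl rfl hne
  · intro l _ δl hδ hmin α β hα hβ hne
    refine max_le (norm_nonneg _) ?_
    match α, β, hα, hβ, hne with
    | k :: a, j :: b, hα, hβ, hne =>
      have ha : a.length = l := by simpa using hα
      have hb : b.length = l := by simpa using hβ
      by_cases hab : centre s r x₀ a = centre s r x₀ b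
      · exact (min_le_left _ _).trans (key l a b k j ha hb hab hne)
      · refine (min_le_right _ _).trans ?_
        have h1 := hmin a b ha hb hab
        have hp : 0 < s ^ (l + 1) := by positivity
        have hn : ∀ (c : List (Fin K)) (i : Fin K),
            ‖s ^ (l + 1) • r (centre s r x₀ c) i‖ ≤ s ^ (l + 1) * lamMax := by
          intro c i
          rw [norm_smul, Real.norm_of_nonneg hp.le]
          exact mul_le_mul_of_nonneg_left (hbd _ (hball c) i) hp.le
        have e : centre s r x₀ a - centre s r x₀ b
            = (centre s r x₀ (k :: a) - centre s r x₀ (j :: b))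
              - s ^ (l + 1) • r (centre s r x₀ a) k + s ^ (l + 1) • r (centre s r x₀ b) j := by
          simp only [centre, ha, hb]
          abel
        have h2 := norm_add_le ((centre s r x₀ (k :: a) - centre s r x₀ (j :: b))
              - s ^ (l + 1) • r (centre s r x₀ a) k) (s ^ (l + 1) • r (centre s r x₀ b) j)
        have h3 := norm_sub_le (centre s r x₀ (k :: a) - centre s r x₀ (j :: b))
              (s ^ (l + 1) • r (centre s r x₀ a) k)
        rw [← e] at h2
        have h4 := hn a k
        have h5 := hn b j
        have h6 : 0 ≤ s ^ (l + 1) * Lr * δl := by positivity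
        linarith
end

section
/- Fix d, K ∈ ℕ₊, 0 < s < 1, constants λ_max > 0 (residual bound), s_sep > 0 (sibling separation), and L_r ≥ 0 (Lipschitz constant). Let r : B → (ℝ^d)^K on the closed Euclidean unit ball B satisfy ‖r_k(x)‖₂ ≤ λ_max, ‖r_k(x) − r_{k̃}(x)‖₂ ≥ s_sep for k ≠ k̃, and max_k ‖r_k(x) − r_k(x̃)‖₂ ≤ L_r‖x−x̃‖₂ for all x, x̃ ∈ B. Fix x_0 ∈ B and define centres recursively by x_∅ = x_0 and x_{αk} = x_α + s^{|α|+1} r_k(x_α), with all centres remaining in B, and let δ_l be the minimum pairwise Euclidean distance among distinct level-l centres. Assume 1 − s − s²·L_r > 0 and 2·λ_max·s/(1 − s − s²·L_r) ≤ s_sep, and set c_sep := 2·λ_max·s/(1 − s − s²·L_r). Then for every l ∈ ℕ₊, δ_l ≥ c_sep·s^l. -/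
/-- **Statement 18.** Geometric lower bound on intra-level separation: if `r` is bounded
by `λ_max`, has sibling separation `s_sep`, and is `L_r`-Lipschitz on the closed unit
ball, and if `1 − s − s² L_r > 0` and `c_sep := 2 λ_max s/(1 − s − s² L_r) ≤ s_sep`,
then every level `l ≥ 1` satisfies `δ_l ≥ c_sep s^l`, i.e. any two distinct level-`l`
centres are at distance at least `c_sep s^l`. -/
theorem intra_level_separation_geometric_lower_bound
    (d K : ℕ) (hd : 0 < d) (hK : 0 < K)
    (s lamMax sSep Lr : ℝ)
    (hs0 : 0 < s) (hs1 : s < 1) (hlam : 0 < lamMax) (hsep : 0 < sSep) (hLr : 0 ≤ Lr)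
    (r : EuclideanSpace ℝ (Fin d) → Fin K → EuclideanSpace ℝ (Fin d))
    (hbd : ∀ x ∈ Metric.closedBall (0 : EuclideanSpace ℝ (Fin d)) 1, ∀ k, ‖r x k‖ ≤ lamMax)
    (hsib : ∀ x ∈ Metric.closedBall (0 : EuclideanSpace ℝ (Fin d)) 1,
      ∀ k k' : Fin K, k ≠ k' → sSep ≤ ‖r x k - r x k'‖)
    (hlip : ∀ x ∈ Metric.closedBall (0 : EuclideanSpace ℝ (Fin d)) 1,
      ∀ y ∈ Metric.closedBall (0 : EuclideanSpace ℝ (Fin d)) 1,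
        ∀ k, ‖r x k - r y k‖ ≤ Lr * ‖x - y‖)
    (x₀ : EuclideanSpace ℝ (Fin d)) (hx₀ : x₀ ∈ Metric.closedBall (0 : EuclideanSpace ℝ (Fin d)) 1)
    (hball : ∀ α : List (Fin K),
      centre s r x₀ α ∈ Metric.closedBall (0 : EuclideanSpace ℝ (Fin d)) 1)
    (hpos : 0 < 1 - s - s ^ 2 * Lr)
    (hcs : 2 * lamMax * s / (1 - s - s ^ 2 * Lr) ≤ sSep) :
    ∀ l : ℕ, 1 ≤ l →
      ∀ α β : List (Fin K), α.length = l → β.length = l →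
        centre s r x₀ α ≠ centre s r x₀ β →
        2 * lamMax * s / (1 - s - s ^ 2 * Lr) * s ^ l
          ≤ ‖centre s r x₀ α - centre s r x₀ β‖ := by
  have hc : 2 * lamMax * s / (1 - s - s ^ 2 * Lr) * (1 - s - s ^ 2 * Lr) = 2 * lamMax * s :=
    div_mul_cancel₀ _ hpos.ne'
  have hc0 : 0 ≤ 2 * lamMax * s / (1 - s - s ^ 2 * Lr) := by positivity
  generalize 2 * lamMax * s / (1 - s - s ^ 2 * Lr) = c at *
  have hc1 : 2 * lamMax * s ≤ c * (1 - s) := by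
    have : 0 ≤ c * (s ^ 2 * Lr) := by positivity
    linarith
  intro l _
  induction l with
  | zero => omega
  | succ n ih =>
    intro α β hα hβ hne
    obtain _ | ⟨k, α⟩ := α
    · simp at hα
    obtain _ | ⟨k', β⟩ := β
    · simp at hβ
    simp only [List.length_cons, Nat.add_right_cancel_iff] at hα hβ
    simp only [centre, hα, hβ] at hne ⊢
    have hA := hball α
    have hB := hball β
    have hs : 0 < s ^ (n + 1) := by positivity
    by_cases hxy : centre s r x₀ α = centre s r x₀ β
    · rw [hxy] at hne ⊢
      have hk : k ≠ k' := by
        rintro rfl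
        exact hne rfl
      rw [add_sub_add_left_eq_sub, ← smul_sub, norm_smul, Real.norm_of_nonneg hs.le, mul_comm]
      exact mul_le_mul_of_nonneg_left (hcs.trans (hsib _ hB k k' hk)) hs.le
    · have hn : 1 ≤ n := by
        by_contra h
        have h0 : n = 0 := by omega
        subst h0
        rw [List.length_eq_zero_iff] at hα hβ
        exact hxy (by rw [hα, hβ])
      have h1 := ih hn α β hα hβ hxy
      have e1 := hbd _ hA k
      have e2 := hbd _ hB k'
      generalize centre s r x₀ α = x at *
      generalize centre s r x₀ β = y at *
      have e3 : ‖s ^ (n + 1) • (r y k' - r x k)‖ ≤ s ^ (n + 1) * (2 * lamMax) := by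
        rw [norm_smul, Real.norm_of_nonneg hs.le]
        refine mul_le_mul_of_nonneg_left ?_ hs.le
        have := norm_sub_le (r y k') (r x k)
        linarith
      have e4 : ‖x - y‖ ≤ ‖x + s ^ (n + 1) • r x k - (y + s ^ (n + 1) • r y k')‖
          + ‖s ^ (n + 1) • (r y k' - r x k)‖ := by
        refine le_trans (le_of_eq ?_) (norm_add_le _ _)
        congr 1
        module
      have e5 := mul_le_mul_of_nonneg_left hc1 (pow_pos hs0 n).le
      rw [pow_succ] at e3 ⊢
      rw [pow_succ] at e4
      linarith
end
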